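/- There is an absolute constant C with the following property. Let (u,P,d) be a smooth solution of the nematic liquid crystal system on ℝ²×(0,T) satisfying the Schwartz decay assumption, and let ω = ∂_1 u_2 − ∂_2 u_1. Then for every t ∈ (0,T), (d/dt) ½‖ω(t,·)‖_{L²}² + ‖∇ω(t,·)‖_{L²}² ≤ C ‖∇d(t,·)‖_{L^∞} ‖Δd(t,·)‖_{L²} ‖∇ω(t,·)‖_{L²}. -/

import Mathlib

open MeasureTheory Real

noncomputable section

/-- `pd i f x` is the `i`-th partial derivative `∂ᵢ f (x)` of `f : ℝⁿ → ℝ`. -/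
def pd {n : ℕ} (i : Fin n) (f : EuclideanSpace ℝ (Fin n) → ℝ)
    (x : EuclideanSpace ℝ (Fin n)) : ℝ :=
  fderiv ℝ f x (EuclideanSpace.single i 1)

/-- `lap f x` is the Laplacian `Δf(x) = Σᵢ ∂ᵢ∂ᵢ f (x)`. -/
def lap {n : ℕ} (f : EuclideanSpace ℝ (Fin n) → ℝ)
    (x : EuclideanSpace ℝ (Fin n)) : ℝ :=
  ∑ i, pd i (fun y => pd i f y) x
/-- The simplified Ericksen–Leslie nematic liquid crystal system on ℝⁿ × (0,T). -/
structure IsNLC (n : ℕ) (T : ℝ)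
    (u : ℝ → EuclideanSpace ℝ (Fin n) → EuclideanSpace ℝ (Fin n))
    (P : ℝ → EuclideanSpace ℝ (Fin n) → ℝ)
    (d : ℝ → EuclideanSpace ℝ (Fin n) → EuclideanSpace ℝ (Fin 3)) : Prop where
  smooth_u : ContDiff ℝ (⊤ : ℕ∞) (Function.uncurry u)
  smooth_P : ContDiff ℝ (⊤ : ℕ∞) (Function.uncurry P)
  smooth_d : ContDiff ℝ (⊤ : ℕ∞) (Function.uncurry d)
  unit : ∀ t ∈ Set.Ioo (0:ℝ) T, ∀ x, ‖d t x‖ = 1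
  momentum : ∀ t ∈ Set.Ioo (0:ℝ) T, ∀ x, ∀ j : Fin n,
    deriv (fun s => u s x j) t - lap (fun y => u t y j) x
      + (∑ i, u t x i * pd i (fun y => u t y j) x) + pd j (P t) x
      = - ∑ i, pd i (fun y => ∑ k : Fin 3,
          pd i (fun z => d t z k) y * pd j (fun z => d t z k) y) x
  director : ∀ t ∈ Set.Ioo (0:ℝ) T, ∀ x, ∀ k : Fin 3,
    deriv (fun s => d s x k) t + ∑ i, u t x i * pd i (fun y => d t y k) x
      = lap (fun y => d t y k) x
        + (∑ i, ∑ k' : Fin 3, (pd i (fun y => d t y k') x) ^ 2) * d t x k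
  divfree : ∀ t ∈ Set.Ioo (0:ℝ) T, ∀ x, ∑ i, pd i (fun y => u t y i) x = 0

/-- A family of functions, Schwartz in x with seminorms locally uniformly bounded in t ∈ (0,T). -/
def SchwartzFamily {n : ℕ} (T : ℝ) (f : ℝ → EuclideanSpace ℝ (Fin n) → ℝ) : Prop :=
  ∀ t₀ ∈ Set.Ioo (0:ℝ) T, ∀ k l : ℕ, ∃ ε > 0, ∃ C : ℝ,
    ∀ t ∈ Set.Ioo (0:ℝ) T, |t - t₀| < ε →
      ∀ x, ‖x‖ ^ k * ‖iteratedFDeriv ℝ l (f t) x‖ ≤ C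

/-- Schwartz decay assumption: u, ∂ₜu, ∇d, ∂ₜ∇d are Schwartz in x, locally uniformly in t. -/
def SchwartzDecay (n : ℕ) (T : ℝ)
    (u : ℝ → EuclideanSpace ℝ (Fin n) → EuclideanSpace ℝ (Fin n))
    (d : ℝ → EuclideanSpace ℝ (Fin n) → EuclideanSpace ℝ (Fin 3)) : Prop :=
  (∀ j : Fin n, SchwartzFamily T fun t x => u t x j) ∧
  (∀ j : Fin n, SchwartzFamily T fun t x => deriv (fun s => u s x j) t) ∧
  (∀ (i : Fin n) (k : Fin 3), SchwartzFamily T fun t x => pd i (fun y => d t y k) x) ∧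
  (∀ (i : Fin n) (k : Fin 3),
    SchwartzFamily T fun t x => deriv (fun s => pd i (fun y => d s y k) x) t)

/-- ‖∇d‖_{L^∞}: essential supremum of |∇d| for d : ℝⁿ → ℝ³. -/
def gradLinf {n : ℕ} (d : EuclideanSpace ℝ (Fin n) → EuclideanSpace ℝ (Fin 3)) : ℝ :=
  essSup (fun x => Real.sqrt (∑ i, ∑ k : Fin 3, (pd i (fun z => d z k) x) ^ 2)) volume

/-- ‖Δd‖_{L²} for d : ℝⁿ → ℝ³. -/
def lapL2 {n : ℕ} (d : EuclideanSpace ℝ (Fin n) → EuclideanSpace ℝ (Fin 3)) : ℝ :=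
  Real.sqrt (∑ k : Fin 3, ∫ x, (lap (fun z => d z k) x) ^ 2)

/-- The scalar vorticity ω = ∂₁u₂ − ∂₂u₁ in 2D. -/
def vort2 (u : EuclideanSpace ℝ (Fin 2) → EuclideanSpace ℝ (Fin 2))
    (x : EuclideanSpace ℝ (Fin 2)) : ℝ :=
  pd 0 (fun y => u y 1) x - pd 1 (fun y => u y 0) x

/-- ‖∇ω‖_{L²} for the 2D scalar vorticity. -/
def gradVort2L2 (u : EuclideanSpace ℝ (Fin 2) → EuclideanSpace ℝ (Fin 2)) : ℝ :=
  Real.sqrt (∑ i, ∫ x, (pd i (vort2 u) x) ^ 2)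

open scoped ContDiff SchwartzMap

/-- Schwartz functions as a predicate on functions. -/
def IsS {n : ℕ} (f : EuclideanSpace ℝ (Fin n) → ℝ) : Prop :=
  ∃ g : 𝓢(EuclideanSpace ℝ (Fin n), ℝ), ∀ x, g x = f x

section helpers
variable {n : ℕ} {f g : EuclideanSpace ℝ (Fin n) → ℝ}

lemma IsS.add (hf : IsS f) (hg : IsS g) : IsS (fun x => f x + g x) := by
  obtain ⟨F, hF⟩ := hf
  obtain ⟨G, hG⟩ := hg
  exact ⟨F + G, fun x => by simp [hF, hG]⟩

lemma IsS.sub (hf : IsS f) (hg : IsS g) : IsS (fun x => f x - g x) := by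
  obtain ⟨F, hF⟩ := hf
  obtain ⟨G, hG⟩ := hg
  exact ⟨F - G, fun x => by simp [hF, hG]⟩

lemma IsS.neg (hf : IsS f) : IsS (fun x => - f x) := by
  obtain ⟨F, hF⟩ := hf
  exact ⟨-F, fun x => by simp [hF]⟩

lemma IsS.mul (hf : IsS f) (hg : IsS g) : IsS (fun x => f x * g x) := by
  obtain ⟨F, hF⟩ := hf
  obtain ⟨G, hG⟩ := hg
  exact ⟨SchwartzMap.pairing (ContinuousLinearMap.mul ℝ ℝ) F G, fun x => by simp [hF, hG]⟩

lemma IsS.sq (hf : IsS f) : IsS (fun x => f x ^ 2) := by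
  simpa only [pow_two] using hf.mul hf

lemma IsS.pd (hf : IsS f) (i : Fin n) : IsS (pd i f) := by
  obtain ⟨F, hF⟩ := hf
  obtain rfl : (F : EuclideanSpace ℝ (Fin n) → ℝ) = f := funext hF
  exact ⟨LineDeriv.lineDerivOp (EuclideanSpace.single i (1:ℝ)) F, fun x => by
    rw [SchwartzMap.lineDerivOp_apply_eq_fderiv]; rfl⟩

lemma IsS.sum {ι : Type*} (s : Finset ι) {f : ι → EuclideanSpace ℝ (Fin n) → ℝ}
    (hf : ∀ i, IsS (f i)) : IsS (fun x => ∑ i ∈ s, f i x) := by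
  choose F hF using hf
  exact ⟨∑ i ∈ s, F i, fun x => by simp [hF]⟩

lemma IsS.integrable (hf : IsS f) : Integrable f := by
  obtain ⟨F, hF⟩ := hf
  obtain rfl : (F : EuclideanSpace ℝ (Fin n) → ℝ) = f := funext hF
  exact F.integrable

lemma IsS.contDiff (hf : IsS f) : ContDiff ℝ ∞ f := by
  obtain ⟨F, hF⟩ := hf
  obtain rfl : (F : EuclideanSpace ℝ (Fin n) → ℝ) = f := funext hF
  exact F.smooth'

lemma IsS.bdd (hf : IsS f) : ∃ C, ∀ x, |f x| ≤ C := by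
  obtain ⟨F, hF⟩ := hf
  obtain rfl : (F : EuclideanSpace ℝ (Fin n) → ℝ) = f := funext hF
  obtain ⟨C, hC⟩ := F.decay' 0 0
  exact ⟨C, fun x => by have := hC x; simp at this; exact this⟩

lemma IsS.ibp (hf : IsS f) (hg : IsS g) (i : Fin n) :
    ∫ x, f x * _root_.pd i g x = - ∫ x, _root_.pd i f x * g x := by
  obtain ⟨F, hF⟩ := hf
  obtain rfl : (F : EuclideanSpace ℝ (Fin n) → ℝ) = f := funext hF
  obtain ⟨G, hG⟩ := hg
  obtain rfl : (G : EuclideanSpace ℝ (Fin n) → ℝ) = g := funext hG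
  have := SchwartzMap.integral_bilinear_lineDerivOp_right_eq_neg_left (μ := volume) F G
    (ContinuousLinearMap.mul ℝ ℝ) (EuclideanSpace.single i 1)
  simpa [SchwartzMap.lineDerivOp_apply_eq_fderiv, _root_.pd] using this

lemma isS_of {T : ℝ} {F : ℝ → EuclideanSpace ℝ (Fin n) → ℝ} (hF : SchwartzFamily T F)
    {t : ℝ} (ht : t ∈ Set.Ioo 0 T) (hs : ContDiff ℝ ∞ (F t)) : IsS (F t) := by
  refine ⟨⟨F t, hs, fun k l => ?_⟩, fun x => rfl⟩
  obtain ⟨ε, hε, C, hC⟩ := hF t ht k l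
  exact ⟨C, hC t ht (by simpa using hε)⟩

lemma contDiff_pd (hf : ContDiff ℝ ∞ f) (i : Fin n) : ContDiff ℝ ∞ (pd i f) := by
  unfold pd
  exact (hf.fderiv_right (m := ∞) (by simp)).clm_apply contDiff_const

lemma pd_add' (hf : ContDiff ℝ ∞ f) (hg : ContDiff ℝ ∞ g) (i : Fin n) (x) :
    pd i (fun y => f y + g y) x = pd i f x + pd i g x := by
  unfold pd
  rw [fderiv_fun_add (hf.differentiable (by simp) x) (hg.differentiable (by simp) x)]; rfl

lemma pd_sub' (hf : ContDiff ℝ ∞ f) (hg : ContDiff ℝ ∞ g) (i : Fin n) (x) :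
    pd i (fun y => f y - g y) x = pd i f x - pd i g x := by
  unfold pd
  rw [fderiv_fun_sub (hf.differentiable (by simp) x) (hg.differentiable (by simp) x)]; rfl

lemma pd_mul' (hf : ContDiff ℝ ∞ f) (hg : ContDiff ℝ ∞ g) (i : Fin n) (x) :
    pd i (fun y => f y * g y) x = f x * pd i g x + g x * pd i f x := by
  unfold pd
  rw [fderiv_fun_mul (hf.differentiable (by simp) x) (hg.differentiable (by simp) x)]; simp

lemma pd_sum' {ι : Type*} (s : Finset ι) {f : ι → EuclideanSpace ℝ (Fin n) → ℝ}
    (hf : ∀ i, ContDiff ℝ ∞ (f i)) (i : Fin n) (x) :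
    pd i (fun y => ∑ k ∈ s, f k y) x = ∑ k ∈ s, pd i (f k) x := by
  unfold pd
  rw [fderiv_fun_sum (fun k _ => (hf k).differentiable (by simp) x)]; simp

lemma pd_comm (hf : ContDiff ℝ ∞ f) (i j : Fin n) (x) :
    pd i (pd j f) x = pd j (pd i f) x := by
  have hd : Differentiable ℝ (fderiv ℝ f) :=
    (hf.fderiv_right (m := ∞) (by simp)).differentiable (by simp)
  have key : ∀ a b : Fin n, pd a (pd b f) x =
      fderiv ℝ (fderiv ℝ f) x (EuclideanSpace.single a 1) (EuclideanSpace.single b 1) := by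
    intro a b
    unfold pd
    rw [fderiv_clm_apply (hd x) (differentiableAt_const _)]; simp
  rw [key, key]
  exact (hf.contDiffAt.isSymmSndFDerivAt (by
    rw [minSmoothness_of_isRCLikeNormedField]; exact WithTop.coe_le_coe.2 le_top)) _ _

end helpers

section timeder
variable {n : ℕ}

lemma slice_t {F : ℝ × EuclideanSpace ℝ (Fin n) → ℝ} (hF : ContDiff ℝ ∞ F) (t x) :
    HasDerivAt (fun s => F (s, x)) (fderiv ℝ F (t, x) (1, 0)) t := by
  have h1 : HasFDerivAt F (fderiv ℝ F (t, x)) (t, x) :=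
    (hF.differentiable (by simp) _).hasFDerivAt
  have h2 : HasDerivAt (fun s : ℝ => (s, x)) ((1 : ℝ), (0 : EuclideanSpace ℝ (Fin n))) t :=
    (hasDerivAt_id t).prodMk (hasDerivAt_const t x)
  exact h1.comp_hasDerivAt t h2

lemma slice_x {F : ℝ × EuclideanSpace ℝ (Fin n) → ℝ} (hF : ContDiff ℝ ∞ F) (t) (i) (x) :
    pd i (fun y => F (t, y)) x = fderiv ℝ F (t, x) (0, EuclideanSpace.single i 1) := by
  have h1 : HasFDerivAt F (fderiv ℝ F (t, x)) (t, x) :=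
    (hF.differentiable (by simp) _).hasFDerivAt
  have h2 := h1.comp x ((hasFDerivAt_const t x).prodMk (hasFDerivAt_id x))
  unfold pd
  have h3 : fderiv ℝ (fun y => F (t, y)) x = _ := h2.fderiv
  rw [h3]; simp

lemma contDiff_slice {F : ℝ × EuclideanSpace ℝ (Fin n) → ℝ} (hF : ContDiff ℝ ∞ F) (t) :
    ContDiff ℝ ∞ (fun y => F (t, y)) := hF.comp (by fun_prop)

lemma contDiff_dt {F : ℝ × EuclideanSpace ℝ (Fin n) → ℝ} (hF : ContDiff ℝ ∞ F) (t) :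
    ContDiff ℝ ∞ (fun y => deriv (fun s => F (s, y)) t) := by
  have : (fun y => deriv (fun s => F (s, y)) t) = fun y => fderiv ℝ F (t, y) (1, 0) :=
    funext fun y => (slice_t hF t y).deriv
  rw [this]
  have h := (hF.fderiv_right (m := ∞) (by simp)).clm_apply
    (contDiff_const (c := ((1 : ℝ), (0 : EuclideanSpace ℝ (Fin n)))))
  exact contDiff_slice h t

lemma hasDerivAt_pd {F : ℝ × EuclideanSpace ℝ (Fin n) → ℝ} (hF : ContDiff ℝ ∞ F) (t) (i) (x) :
    HasDerivAt (fun s => pd i (fun y => F (s, y)) x)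
      (pd i (fun y => deriv (fun s => F (s, y)) t) x) t := by
  have hd : ContDiff ℝ ∞ (fderiv ℝ F) := hF.fderiv_right (m := ∞) (by simp)
  have hdd : Differentiable ℝ (fderiv ℝ F) := hd.differentiable (by simp)
  have e1 : (fun s => pd i (fun y => F (s, y)) x)
      = fun s => (fun p => fderiv ℝ F p (0, EuclideanSpace.single i 1)) (s, x) :=
    funext fun s => slice_x hF s i x
  have e2 : (fun y => deriv (fun s => F (s, y)) t)
      = fun y => (fun p => fderiv ℝ F p (1, 0)) (t, y) :=
    funext fun y => (slice_t hF t y).deriv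
  rw [e1, e2, slice_x (F := fun p => fderiv ℝ F p (1, 0)) (hd.clm_apply contDiff_const)]
  have h := slice_t (F := fun p => fderiv ℝ F p (0, EuclideanSpace.single i 1))
    (hd.clm_apply contDiff_const) t x
  convert h using 1
  rw [fderiv_clm_apply (hdd _) (differentiableAt_const _),
    fderiv_clm_apply (hdd _) (differentiableAt_const _)]
  simp only [fderiv_fun_const, Pi.zero_apply, ContinuousLinearMap.comp_zero, zero_add,
    ContinuousLinearMap.flip_apply]
  exact (hF.contDiffAt.isSymmSndFDerivAt (by
    rw [minSmoothness_of_isRCLikeNormedField]; exact WithTop.coe_le_coe.2 le_top)) _ _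

lemma pd_le {T : ℝ} {F : ℝ → EuclideanSpace ℝ (Fin n) → ℝ} (hF : SchwartzFamily T F)
    {t : ℝ} (ht : t ∈ Set.Ioo 0 T) (k : ℕ) : ∃ C, ∀ᶠ s in nhds t,
      ∀ i x, ‖x‖ ^ k * |pd i (F s) x| ≤ C := by
  obtain ⟨ε, hε, C, hC⟩ := hF t ht k 1
  refine ⟨C, ?_⟩
  filter_upwards [isOpen_Ioo.mem_nhds ht, Metric.ball_mem_nhds t hε] with s hs hs' i x
  refine le_trans ?_ (hC s hs (by simpa [Real.dist_eq] using hs') x)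
  gcongr
  rw [norm_iteratedFDeriv_one]
  have := (fderiv ℝ (F s) x).le_opNorm (EuclideanSpace.single i 1)
  simpa [pd] using this

end timeder

lemma fixed_time (a b v0 v1 P : EuclideanSpace ℝ (Fin 2) → ℝ)
    (D : Fin 3 → EuclideanSpace ℝ (Fin 2) → ℝ)
    (ha : IsS a) (hb : IsS b) (hv0 : IsS v0) (hv1 : IsS v1) (hP : ContDiff ℝ ∞ P)
    (hD : ∀ k, ContDiff ℝ ∞ (D k)) (hg : ∀ i k, IsS (pd i (D k)))
    (m0 : ∀ x, v0 x - lap a x + (a x * pd 0 a x + b x * pd 1 a x) + pd 0 P x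
      = - (pd 0 (fun y => ∑ k, pd 0 (D k) y * pd 0 (D k) y) x
          + pd 1 (fun y => ∑ k, pd 1 (D k) y * pd 0 (D k) y) x))
    (m1 : ∀ x, v1 x - lap b x + (a x * pd 0 b x + b x * pd 1 b x) + pd 1 P x
      = - (pd 0 (fun y => ∑ k, pd 0 (D k) y * pd 1 (D k) y) x
          + pd 1 (fun y => ∑ k, pd 1 (D k) y * pd 1 (D k) y) x))
    (hdiv : ∀ x, pd 0 a x + pd 1 b x = 0)
    (w : EuclideanSpace ℝ (Fin 2) → ℝ) (hw : w = fun x => pd 0 b x - pd 1 a x) :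
    (∫ x, w x * (pd 0 v1 x - pd 1 v0 x)) + ((∫ x, pd 0 w x ^ 2) + ∫ x, pd 1 w x ^ 2)
      = ∫ x, ∑ k, lap (D k) x * (pd 0 w x * pd 1 (D k) x - pd 1 w x * pd 0 (D k) x) := by
  have hwS : IsS w := by rw [hw]; exact (hb.pd 0).sub (ha.pd 1)
  have ca := ha.contDiff
  have cb := hb.contDiff
  have cg : ∀ i k, ContDiff ℝ ∞ (pd i (D k)) := fun i k => (hg i k).contDiff
  -- the modified pressure
  set R : EuclideanSpace ℝ (Fin 2) → ℝ := fun y => (a y * a y + b y * b y)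
    + ((∑ k, pd 0 (D k) y * pd 0 (D k) y) + ∑ k, pd 1 (D k) y * pd 1 (D k) y) with hR
  have cR : ContDiff ℝ ∞ R := by
    rw [hR]; fun_prop
  set Q : EuclideanSpace ℝ (Fin 2) → ℝ := fun y => P y + (1/2 : ℝ) * R y with hQ
  have cQ : ContDiff ℝ ∞ Q := by rw [hQ]; fun_prop
  have pdR : ∀ j x, pd j R x = 2 * (a x * pd j a x + b x * pd j b x)
      + 2 * ∑ k, (pd 0 (D k) x * pd j (pd 0 (D k)) x + pd 1 (D k) x * pd j (pd 1 (D k)) x) := by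
    intro j x
    rw [hR, pd_add' (by fun_prop) (by fun_prop), pd_add' (by fun_prop) (by fun_prop),
      pd_add' (by fun_prop) (by fun_prop), pd_sum' _ (fun k => by fun_prop),
      pd_sum' _ (fun k => by fun_prop), pd_mul' ca ca, pd_mul' cb cb]
    simp only [fun k => pd_mul' (cg 0 k) (cg 0 k) j x, fun k => pd_mul' (cg 1 k) (cg 1 k) j x,
      Fin.sum_univ_three]
    ring
  have pdQ : ∀ j x, pd j Q x = pd j P x + (a x * pd j a x + b x * pd j b x)
      + ∑ k, (pd 0 (D k) x * pd j (pd 0 (D k)) x + pd 1 (D k) x * pd j (pd 1 (D k)) x) := by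
    intro j x
    have h0 : pd j (fun _ : EuclideanSpace ℝ (Fin 2) => (1/2 : ℝ)) x = 0 := by simp [pd]
    rw [hQ, pd_add' hP (by fun_prop), pd_mul' contDiff_const cR, pdR, h0]
    ring
  have hdiv' : ∀ i x, pd i (pd 0 a) x + pd i (pd 1 b) x = 0 := by
    intro i x
    rw [← pd_add' (contDiff_pd ca 0) (contDiff_pd cb 1)]
    simp only [hdiv]
    simp [pd]
  have pw : ∀ i x, pd i w x = pd i (pd 0 b) x - pd i (pd 1 a) x := by
    intro i x
    rw [hw, pd_sub' (contDiff_pd cb 0) (contDiff_pd ca 1)]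
  have lapa : ∀ x, lap a x = - pd 1 w x := by
    intro x
    have h := hdiv' 0 x
    rw [pd_comm cb 0 1] at h
    rw [pw]
    simp only [lap, Fin.sum_univ_two]
    change pd 0 (pd 0 a) x + pd 1 (pd 1 a) x = _
    linarith
  have lapb : ∀ x, lap b x = pd 0 w x := by
    intro x
    have h := hdiv' 1 x
    rw [pd_comm ca 1 0] at h
    rw [pw]
    simp only [lap, Fin.sum_univ_two]
    change pd 0 (pd 0 b) x + pd 1 (pd 1 b) x = _
    linarith
  have lapD : ∀ k x, lap (D k) x = pd 0 (pd 0 (D k)) x + pd 1 (pd 1 (D k)) x := by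
    intro k x
    simp only [lap, Fin.sum_univ_two]
  have e0 : ∀ x, v0 x = - pd 1 w x + b x * w x - pd 0 Q x - ∑ k, lap (D k) x * pd 0 (D k) x := by
    intro x
    have h := m0 x
    rw [pd_sum' _ (fun k => by fun_prop), pd_sum' _ (fun k => by fun_prop), lapa] at h
    simp only [fun k => pd_mul' (cg 0 k) (cg 0 k) 0 x,
      fun k => pd_mul' (cg 1 k) (cg 0 k) 1 x, fun k => pd_comm (hD k) 1 0 x] at h
    rw [pdQ]
    simp only [lapD, Fin.sum_univ_three] at h ⊢
    rw [show w x = pd 0 b x - pd 1 a x by rw [hw]]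
    linear_combination h
  have e1 : ∀ x, v1 x = pd 0 w x - a x * w x - pd 1 Q x - ∑ k, lap (D k) x * pd 1 (D k) x := by
    intro x
    have h := m1 x
    rw [pd_sum' _ (fun k => by fun_prop), pd_sum' _ (fun k => by fun_prop), lapb] at h
    simp only [fun k => pd_mul' (cg 0 k) (cg 1 k) 0 x,
      fun k => pd_mul' (cg 1 k) (cg 1 k) 1 x, fun k => pd_comm (hD k) 0 1 x] at h
    rw [pdQ]
    simp only [lapD, Fin.sum_univ_three] at h ⊢
    rw [show w x = pd 0 b x - pd 1 a x by rw [hw]]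
    linear_combination h
  have lapS : ∀ k, IsS (lap (D k)) := by
    intro k
    have : lap (D k) = fun x => pd 0 (pd 0 (D k)) x + pd 1 (pd 1 (D k)) x := funext (lapD k)
    rw [this]
    exact ((hg 0 k).pd 0).add ((hg 1 k).pd 1)
  have AS : ∀ j, IsS (fun x => ∑ k, lap (D k) x * pd j (D k) x) := fun j =>
    IsS.sum _ (fun k => (lapS k).mul (hg j k))
  have Q0 : IsS (pd 0 Q) := by
    have : pd 0 Q = fun x => - pd 1 w x + b x * w x - ∑ k, lap (D k) x * pd 0 (D k) x - v0 x := by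
      funext x; rw [e0 x]; ring
    rw [this]
    exact (((hwS.pd 1).neg.add (hb.mul hwS)).sub (AS 0)).sub hv0
  have Q1 : IsS (pd 1 Q) := by
    have : pd 1 Q = fun x => pd 0 w x - a x * w x - ∑ k, lap (D k) x * pd 1 (D k) x - v1 x := by
      funext x; rw [e1 x]; ring
    rw [this]
    exact (((hwS.pd 0).sub (ha.mul hwS)).sub (AS 1)).sub hv1
  have w0 := hwS.pd 0
  have w1 := hwS.pd 1
  -- pressure term
  have I1 : (∫ x, pd 0 w x * pd 1 Q x) - ∫ x, pd 1 w x * pd 0 Q x = 0 := by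
    have h1 := hwS.ibp Q1 0
    have h2 := hwS.ibp Q0 1
    have h3 : ∫ x, w x * pd 0 (pd 1 Q) x = ∫ x, w x * pd 1 (pd 0 Q) x := by
      simp only [pd_comm cQ 0 1]
    linarith
  -- transport term
  have I2 : (∫ x, (a x * w x) * pd 0 w x) + ∫ x, (b x * w x) * pd 1 w x = 0 := by
    have h1 := (ha.mul hwS).ibp hwS 0
    have h2 := (hb.mul hwS).ibp hwS 1
    have k1 : ∫ x, pd 0 (fun x => a x * w x) x * w x
        = (∫ x, (a x * w x) * pd 0 w x) + ∫ x, pd 0 a x * (w x * w x) := by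
      rw [← integral_add ((ha.mul hwS).mul w0).integrable
        ((ha.pd 0).mul (hwS.mul hwS)).integrable]
      congr 1; funext x; rw [pd_mul' ca hwS.contDiff]; ring
    have k2 : ∫ x, pd 1 (fun x => b x * w x) x * w x
        = (∫ x, (b x * w x) * pd 1 w x) + ∫ x, pd 1 b x * (w x * w x) := by
      rw [← integral_add ((hb.mul hwS).mul w1).integrable
        ((hb.pd 1).mul (hwS.mul hwS)).integrable]
      congr 1; funext x; rw [pd_mul' cb hwS.contDiff]; ring
    have k3 : (∫ x, pd 0 a x * (w x * w x)) + ∫ x, pd 1 b x * (w x * w x) = 0 := by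
      rw [← integral_add ((ha.pd 0).mul (hwS.mul hwS)).integrable
        ((hb.pd 1).mul (hwS.mul hwS)).integrable]
      simp only [← add_mul, hdiv, zero_mul, integral_zero]
    linarith
  have s1 : ∫ x, w x * (pd 0 v1 x - pd 1 v0 x)
      = (∫ x, pd 1 w x * v0 x) - ∫ x, pd 0 w x * v1 x := by
    have h1 := hwS.ibp hv1 0
    have h2 := hwS.ibp hv0 1
    simp only [mul_sub]
    rw [integral_sub (hwS.mul (hv1.pd 0)).integrable (hwS.mul (hv0.pd 1)).integrable]
    linarith
  have t0 : ∫ x, pd 1 w x * v0 x = - (∫ x, pd 1 w x ^ 2) + (∫ x, (b x * w x) * pd 1 w x)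
      - (∫ x, pd 1 w x * pd 0 Q x) - ∫ x, pd 1 w x * ∑ k, lap (D k) x * pd 0 (D k) x := by
    rw [← integral_neg, ← integral_add w1.sq.neg.integrable ((hb.mul hwS).mul w1).integrable,
      ← integral_sub (w1.sq.neg.add ((hb.mul hwS).mul w1)).integrable (w1.mul Q0).integrable,
      ← integral_sub ((w1.sq.neg.add ((hb.mul hwS).mul w1)).sub (w1.mul Q0)).integrable
        (w1.mul (AS 0)).integrable]
    congr 1; funext x; rw [e0 x]; ring
  have t1 : ∫ x, pd 0 w x * v1 x = (∫ x, pd 0 w x ^ 2) - (∫ x, (a x * w x) * pd 0 w x)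
      - (∫ x, pd 0 w x * pd 1 Q x) - ∫ x, pd 0 w x * ∑ k, lap (D k) x * pd 1 (D k) x := by
    rw [← integral_sub w0.sq.integrable ((ha.mul hwS).mul w0).integrable,
      ← integral_sub (w0.sq.sub ((ha.mul hwS).mul w0)).integrable (w0.mul Q1).integrable,
      ← integral_sub ((w0.sq.sub ((ha.mul hwS).mul w0)).sub (w0.mul Q1)).integrable
        (w0.mul (AS 1)).integrable]
    congr 1; funext x; rw [e1 x]; ring
  have t2 : ∫ x, ∑ k, lap (D k) x * (pd 0 w x * pd 1 (D k) x - pd 1 w x * pd 0 (D k) x)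
      = (∫ x, pd 0 w x * ∑ k, lap (D k) x * pd 1 (D k) x)
        - ∫ x, pd 1 w x * ∑ k, lap (D k) x * pd 0 (D k) x := by
    rw [← integral_sub (w0.mul (AS 1)).integrable (w1.mul (AS 0)).integrable]
    congr 1; funext x
    simp only [Fin.sum_univ_three]; ring
  rw [s1, t0, t1, t2]
  linarith

lemma cs_bound {E : Type*} [MeasurableSpace E] {μ : Measure E} {h F G : E → ℝ} {M : ℝ}
    (hM : 0 ≤ M)
    (hh : Integrable h μ) (hF : Integrable F μ) (hG : Integrable G μ)
    (F0 : ∀ x, 0 ≤ F x) (G0 : ∀ x, 0 ≤ G x)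
    (hb : ∀ᵐ x ∂μ, h x ^ 2 ≤ M ^ 2 * F x * G x) :
    ∫ x, h x ∂μ ≤ M * √(∫ x, F x ∂μ) * √(∫ x, G x ∂μ) := by
  have key : ∀ r : ℝ, 0 ≤ (M ^ 2 * ∫ x, F x ∂μ) * (r * r) + (2 * ∫ x, h x ∂μ) * r
      + ∫ x, G x ∂μ := by
    intro r
    have : (M ^ 2 * ∫ x, F x ∂μ) * (r * r) + (2 * ∫ x, h x ∂μ) * r + ∫ x, G x ∂μ
        = ∫ x, ((M ^ 2 * (r * r)) * F x + (2 * r) * h x + G x) ∂μ := by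
      rw [integral_add (by fun_prop) hG, integral_add (by fun_prop) (by fun_prop),
        integral_const_mul, integral_const_mul]
      ring
    rw [this]
    apply integral_nonneg_of_ae
    filter_upwards [hb] with x hx
    have hF0 := F0 x
    have hG0 := G0 x
    simp only [Pi.zero_apply]
    rcases hG0.eq_or_lt with h0 | h0
    · have : h x = 0 := by
        rw [← h0] at hx
        nlinarith [sq_nonneg (h x)]
      rw [this, ← h0]
      have : 0 ≤ M ^ 2 * (r * r) * F x := by
        have := mul_self_nonneg r
        positivity
      linarith
    · have : 0 ≤ (M ^ 2 * (r * r) * F x + 2 * r * h x + G x) * G x := by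
        nlinarith [sq_nonneg (r * h x + G x), mul_le_mul_of_nonneg_left hx (sq_nonneg r)]
      exact nonneg_of_mul_nonneg_left this h0
  have hd := discrim_le_zero key
  rw [discrim] at hd
  have hA : 0 ≤ ∫ x, F x ∂μ := integral_nonneg F0
  have hB : 0 ≤ ∫ x, G x ∂μ := integral_nonneg G0
  refine le_trans (le_abs_self _) (abs_le_of_sq_le_sq ?_ (by positivity))
  rw [mul_pow, mul_pow, Real.sq_sqrt hA, Real.sq_sqrt hB]
  linarith

lemma one_add_le {r : ℝ} (hr : 0 ≤ r) : (1 + r) ^ 3 ≤ 4 * (1 + r ^ 3) := by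
  nlinarith [mul_nonneg (add_nonneg zero_le_one hr) (sq_nonneg (r - 1))]

lemma time_der (u : ℝ → EuclideanSpace ℝ (Fin 2) → EuclideanSpace ℝ (Fin 2)) (T : ℝ)
    (hu : ∀ j : Fin 2, ContDiff ℝ ∞ (fun p : ℝ × EuclideanSpace ℝ (Fin 2) => u p.1 p.2 j))
    (h1 : ∀ j : Fin 2, SchwartzFamily T fun t x => u t x j)
    (h2 : ∀ j : Fin 2, SchwartzFamily T fun t x => deriv (fun s => u s x j) t)
    (t : ℝ) (ht : t ∈ Set.Ioo 0 T) :
    HasDerivAt (fun s => (1/2 : ℝ) * ∫ x, (vort2 (u s) x) ^ 2)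
      (∫ x, vort2 (u t) x * (pd 0 (fun y => deriv (fun s => u s y 1) t) x
        - pd 1 (fun y => deriv (fun s => u s y 0) t) x)) t := by
  have hvS : ∀ s ∈ Set.Ioo 0 T, IsS (vort2 (u s)) := fun s hs =>
    ((isS_of (h1 1) hs (contDiff_slice (hu 1) s)).pd 0).sub
      ((isS_of (h1 0) hs (contDiff_slice (hu 0) s)).pd 1)
  have hS2 : ∀ j, IsS (fun y => deriv (fun s => u s y j) t) := fun j =>
    isS_of (h2 j) ht (contDiff_dt (hu j) t)
  obtain ⟨A1, hA1⟩ := pd_le (h1 1) ht 0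
  obtain ⟨A0, hA0⟩ := pd_le (h1 0) ht 0
  obtain ⟨B1, hB1⟩ := pd_le (h2 1) ht 0
  obtain ⟨B0, hB0⟩ := pd_le (h2 0) ht 0
  obtain ⟨C1, hC1⟩ := pd_le (h2 1) ht 3
  obtain ⟨C0, hC0⟩ := pd_le (h2 0) ht 3
  have hs := (hA1.and (hA0.and (hB1.and (hB0.and (hC1.and hC0)))))
  set W : ℝ → EuclideanSpace ℝ (Fin 2) → ℝ := fun s x =>
    pd 0 (fun y => deriv (fun r => u r y 1) s) x - pd 1 (fun y => deriv (fun r => u r y 0) s) x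
    with hW
  have hd : ∀ s x, HasDerivAt (fun s => vort2 (u s) x) (W s x) s := fun s x =>
    (hasDerivAt_pd (hu 1) s 0 x).sub (hasDerivAt_pd (hu 0) s 1 x)
  have main := hasDerivAt_integral_of_dominated_loc_of_deriv_le (μ := volume) (x₀ := t)
    (F := fun s x => vort2 (u s) x ^ 2) (F' := fun s x => 2 * (vort2 (u s) x * W s x))
    (bound := fun x => 2 * ((A1 + A0) * (4 * (B1 + B0 + (C1 + C0)))) * (1 + ‖x‖) ^ (-(3:ℝ)))
    hs ?_ (hvS t ht).sq.integrable ?_ ?_ ?_ ?_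
  · have := main.2.const_mul (1/2 : ℝ)
    rw [integral_const_mul] at this
    rwa [← mul_assoc, one_div_mul_cancel two_ne_zero, one_mul] at this
  · filter_upwards [isOpen_Ioo.mem_nhds ht] with s hs
    exact (hvS s hs).sq.integrable.aestronglyMeasurable
  · exact (((hvS t ht).mul (((hS2 1).pd 0).sub ((hS2 0).pd 1))).integrable.const_mul
      2).aestronglyMeasurable
  · refine Filter.Eventually.of_forall fun x s hs => ?_
    obtain ⟨q1, q2, q3, q4, q5, q6⟩ := hs
    have q1 := q1 0 x
    have q2 := q2 1 x
    have q3 := q3 0 x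
    have q4 := q4 1 x
    have q5 := q5 0 x
    have q6 := q6 1 x
    simp only [pow_zero, one_mul] at q1 q2 q3 q4
    have r1 : |vort2 (u s) x| ≤ A1 + A0 := (abs_sub _ _).trans (add_le_add q1 q2)
    have r2 : |W s x| ≤ |pd 0 (fun y => deriv (fun r => u r y 1) s) x|
      + |pd 1 (fun y => deriv (fun r => u r y 0) s) x| := abs_sub _ _
    have hx := norm_nonneg x
    have r3 : (1 + ‖x‖) ^ 3 * |W s x| ≤ 4 * (B1 + B0 + (C1 + C0)) := by
      have p1 : (1 + ‖x‖) ^ 3 * |W s x| ≤ 4 * (1 + ‖x‖ ^ 3) * |W s x| :=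
        mul_le_mul_of_nonneg_right (one_add_le hx) (abs_nonneg _)
      have p2 := mul_le_mul_of_nonneg_left r2 (show 0 ≤ 4 * (1 + ‖x‖ ^ 3) by positivity)
      linarith
    have hp : (0:ℝ) < (1 + ‖x‖) ^ 3 := by positivity
    rw [Real.rpow_neg (by positivity), show (3:ℝ) = ((3:ℕ):ℝ) by norm_num, Real.rpow_natCast,
      ← div_eq_mul_inv, le_div_iff₀ hp, Real.norm_eq_abs, abs_mul, abs_mul, abs_two]
    have hA : 0 ≤ A1 + A0 := (abs_nonneg _).trans r1
    have := mul_le_mul r1 r3 (by positivity) hA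
    push_cast
    linarith
  · exact (integrable_one_add_norm (by simp; norm_num)).const_mul _
  · refine Filter.Eventually.of_forall fun x s _ => ?_
    have := (hd s x).fun_pow 2
    have e : 2 * (vort2 (u s) x * W s x) = ((2:ℕ):ℝ) * vort2 (u s) x ^ (2 - 1) * W s x := by
      norm_num; ring
    rw [e]
    exact this

/-- In 2D: (d/dt)½‖ω‖² + ‖∇ω‖² ≤ C‖∇d‖_{L^∞}‖Δd‖_{L²}‖∇ω‖_{L²}. -/
theorem statement16 :
    ∃ C : ℝ, 0 < C ∧
      ∀ (T : ℝ) (u : ℝ → EuclideanSpace ℝ (Fin 2) → EuclideanSpace ℝ (Fin 2))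
        (P : ℝ → EuclideanSpace ℝ (Fin 2) → ℝ)
        (d : ℝ → EuclideanSpace ℝ (Fin 2) → EuclideanSpace ℝ (Fin 3)),
        IsNLC 2 T u P d → SchwartzDecay 2 T u d →
        ∀ t ∈ Set.Ioo (0:ℝ) T, ∃ D : ℝ,
          HasDerivAt (fun s => (1/2 : ℝ) * ∫ x, (vort2 (u s) x) ^ 2) D t ∧
          D + ∑ i, ∫ x, (pd i (vort2 (u t)) x) ^ 2
            ≤ C * gradLinf (d t) * lapL2 (d t) * gradVort2L2 (u t) := by
  refine ⟨1, one_pos, fun T u P d hN hS t ht => ?_⟩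
  obtain ⟨s1, s2, s3, -⟩ := hS
  have hu : ∀ j : Fin 2, ContDiff ℝ ∞
      (fun p : ℝ × EuclideanSpace ℝ (Fin 2) => u p.1 p.2 j) := fun j =>
    (contDiff_euclidean.1 hN.smooth_u) j
  have hdd : ∀ k : Fin 3, ContDiff ℝ ∞
      (fun p : ℝ × EuclideanSpace ℝ (Fin 2) => d p.1 p.2 k) := fun k =>
    (contDiff_euclidean.1 hN.smooth_d) k
  have hD : ∀ k, ContDiff ℝ ∞ (fun y => d t y k) := fun k => contDiff_slice (hdd k) t
  have hg : ∀ i k, IsS (pd i (fun y => d t y k)) := fun i k =>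
    isS_of (s3 i k) ht (contDiff_pd (hD k) i)
  have hus : ∀ j, IsS (fun y => u t y j) := fun j =>
    isS_of (s1 j) ht (contDiff_slice (hu j) t)
  have hvs : ∀ j, IsS (fun y => deriv (fun s => u s y j) t) := fun j =>
    isS_of (s2 j) ht (contDiff_dt (hu j) t)
  refine ⟨_, time_der u T hu s1 s2 t ht, ?_⟩
  have hft := fixed_time (fun y => u t y 0) (fun y => u t y 1)
    (fun y => deriv (fun s => u s y 0) t) (fun y => deriv (fun s => u s y 1) t) (P t)
    (fun k y => d t y k) (hus 0) (hus 1) (hvs 0) (hvs 1) (contDiff_slice hN.smooth_P t) hD hg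
    (fun x => by simpa [Fin.sum_univ_two] using hN.momentum t ht x 0)
    (fun x => by simpa [Fin.sum_univ_two] using hN.momentum t ht x 1)
    (fun x => by simpa [Fin.sum_univ_two] using hN.divfree t ht x)
    (vort2 (u t)) rfl
  rw [Fin.sum_univ_two, hft]
  have hw : IsS (vort2 (u t)) := ((hus 1).pd 0).sub ((hus 0).pd 1)
  have hL : ∀ k, IsS (lap (fun y => d t y k)) := fun k =>
    IsS.sum _ (fun i => (hg i k).pd i)
  set N : EuclideanSpace ℝ (Fin 2) → ℝ := fun x =>
    Real.sqrt (∑ i, ∑ k : Fin 3, (pd i (fun z => d t z k) x) ^ 2) with hNdef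
  have hbdd : Filter.IsBoundedUnder (· ≤ ·) (ae volume) N := by
    obtain ⟨C, hC⟩ := (IsS.sum Finset.univ fun i => IsS.sum Finset.univ fun k =>
      (hg i k).sq).bdd
    exact ⟨√C, Filter.eventually_map.2 (Filter.Eventually.of_forall fun x =>
      Real.sqrt_le_sqrt ((le_abs_self _).trans (hC x)))⟩
  have hae : ∀ᵐ x, N x ≤ gradLinf (d t) := ae_le_essSup hbdd
  have hM : 0 ≤ gradLinf (d t) := by
    obtain ⟨x, hx⟩ := hae.exists
    exact (Real.sqrt_nonneg _).trans hx
  have hcs := cs_bound (μ := volume) (M := gradLinf (d t))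
    (h := fun x => ∑ k : Fin 3, lap (fun y => d t y k) x *
      (pd 0 (vort2 (u t)) x * pd 1 (fun y => d t y k) x
        - pd 1 (vort2 (u t)) x * pd 0 (fun y => d t y k) x))
    (F := fun x => ∑ k : Fin 3, lap (fun y => d t y k) x ^ 2)
    (G := fun x => ∑ i : Fin 2, pd i (vort2 (u t)) x ^ 2) hM
    (IsS.sum _ fun k => (hL k).mul (((hw.pd 0).mul (hg 1 k)).sub
      ((hw.pd 1).mul (hg 0 k)))).integrable
    (IsS.sum _ fun k => (hL k).sq).integrable (IsS.sum _ fun i => (hw.pd i).sq).integrable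
    (fun x => by positivity) (fun x => by positivity) ?_
  · rw [integral_finsetSum _ (fun k _ => (hL k).sq.integrable),
      integral_finsetSum _ (fun i _ => (hw.pd i).sq.integrable)] at hcs
    rw [one_mul]
    exact hcs
  · filter_upwards [hae] with x hx
    have hx2 : ∑ i, ∑ k : Fin 3, (pd i (fun z => d t z k) x) ^ 2 ≤ gradLinf (d t) ^ 2 :=
      (Real.sqrt_le_left hM).1 hx
    refine (Finset.sum_mul_sq_le_sq_mul_sq _ _ _).trans ?_
    have hF : 0 ≤ ∑ k : Fin 3, lap (fun y => d t y k) x ^ 2 := by positivity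
    have hG : 0 ≤ ∑ i : Fin 2, pd i (vort2 (u t)) x ^ 2 := by positivity
    have hk : ∑ k : Fin 3, (pd 0 (vort2 (u t)) x * pd 1 (fun y => d t y k) x
        - pd 1 (vort2 (u t)) x * pd 0 (fun y => d t y k) x) ^ 2
        ≤ (∑ i : Fin 2, pd i (vort2 (u t)) x ^ 2) * gradLinf (d t) ^ 2 := by
      refine le_trans ?_ (mul_le_mul_of_nonneg_left hx2 hG)
      rw [Fin.sum_univ_two, Fin.sum_univ_two, ← Finset.sum_add_distrib, Finset.mul_sum]
      refine Finset.sum_le_sum fun k _ => ?_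
      nlinarith [sq_nonneg (pd 0 (vort2 (u t)) x * pd 0 (fun y => d t y k) x
        + pd 1 (vort2 (u t)) x * pd 1 (fun y => d t y k) x)]
    have := mul_le_mul_of_nonneg_left hk hF
    linarith
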